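/- arXiv:1804.04330 — 2 statements merged into one kernel-verified Lean document; each statement's English description precedes it below -/
import Mathlib

section
/- For N ≥ 2 colors: for each k ∈ Fin N let W^(k) = {x ∈ (Fin N)^n | x_i = c⁽¹⁾, x_{i+1} = c⁽ᵏ⁾} for a fixed interior site i. Then ∑_{x ∈ W^(1)} w(x) = exp(2/T)·∑_{x ∈ W^(k)} w(x) for every k ≠ 1, and consequently ∑_{x ∈ W^(1)} π(x) = 1/(N·(1 + (N-1)·exp(-2/T))) and ∑_{x ∈ W^(k)} π(x) = exp(-2/T)/(N·(1 + (N-1)·exp(-2/T))) for k ≠ 1. -/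
open Finset

/-- Unnormalized Gibbs weight of the 1-D Ising model with `N` colors on `n` sites:
`w(x) = exp((1/T) ∑_{k=1}^{n-1} (𝟙{x_k = x_{k+1}} - 𝟙{x_k ≠ x_{k+1}}))`. -/
noncomputable def isingW (N n : ℕ) (T : ℝ) (x : Fin n → Fin N) : ℝ :=
  Real.exp (1 / T * ∑ k : Fin (n - 1),
    (if x ⟨k.1, by have := k.2; omega⟩ = x ⟨k.1 + 1, by have := k.2; omega⟩
      then (1 : ℝ) else -1))

/-- Partition function of the 1-D Ising model. -/
noncomputable def isingZ (N n : ℕ) (T : ℝ) : ℝ :=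
  ∑ x : Fin n → Fin N, isingW N n T x

/-- Normalized Gibbs measure of the 1-D Ising model. -/
noncomputable def isingPi (N n : ℕ) (T : ℝ) (x : Fin n → Fin N) : ℝ :=
  isingW N n T x / isingZ N n T

/-!
Delete one bond `e₀` that disconnects the graph of sites. Permuting the colors independently on the
two sides changes no bond except `e₀`, so the total weight of the configurations with prescribed
colors `a`, `b` at the ends of `e₀` depends on `a`, `b` only through the factor `exp (± J e₀)`
of that bond. Summing over all pairs of colors expresses the partition function as a multiple of any
one of these totals. In the chain, every bond disconnects.
-/

section PottsModel

variable {V ι α : Type*}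

/-- The bond `e₀` is a bridge of the multigraph with bonds `bond : ι → V × V`, and `S` is the side
of its first endpoint. The side is part of the data because it is where the colors are permuted. -/
structure IsBridgeCut (bond : ι → V × V) (e₀ : ι) (S : Set V) : Prop where
  fst_mem : (bond e₀).1 ∈ S
  snd_notMem : (bond e₀).2 ∉ S
  fst_mem_iff_snd_mem : ∀ e ≠ e₀, (bond e).1 ∈ S ↔ (bond e).2 ∈ S

open scoped Classical in
/-- Permute the colors by `σ` at the sites in `S` and by `τ` at the other sites. -/
noncomputable def recolor (S : Set V) (σ τ : Equiv.Perm α) : Equiv.Perm (V → α) :=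
  Equiv.piCongrRight fun v => if v ∈ S then σ else τ

theorem recolor_apply_of_mem {S : Set V} {v : V} (hv : v ∈ S) (σ τ : Equiv.Perm α) (x : V → α) :
    recolor S σ τ x v = σ (x v) := by
  simp [recolor, hv]

theorem recolor_apply_of_notMem {S : Set V} {v : V} (hv : v ∉ S) (σ τ : Equiv.Perm α)
    (x : V → α) : recolor S σ τ x v = τ (x v) := by
  simp [recolor, hv]

variable [DecidableEq α]

/-- The interaction of two neighboring colors: `1` if they agree and `-1` otherwise. -/
def agreement (a b : α) : ℝ := if a = b then 1 else -1

@[simp]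
theorem agreement_self (a : α) : agreement a a = 1 := if_pos rfl

theorem agreement_of_ne {a b : α} (h : a ≠ b) : agreement a b = -1 := if_neg h

@[simp]
theorem agreement_perm (σ : Equiv.Perm α) (a b : α) : agreement (σ a) (σ b) = agreement a b := by
  simp only [agreement, σ.apply_eq_iff_eq]

theorem IsBridgeCut.agreement_recolor {bond : ι → V × V} {e₀ e : ι} {S : Set V}
    (hS : IsBridgeCut bond e₀ S) (he : e ≠ e₀) (σ τ : Equiv.Perm α) (x : V → α) :
    agreement (recolor S σ τ x (bond e).1) (recolor S σ τ x (bond e).2) =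
      agreement (x (bond e).1) (x (bond e).2) := by
  have hends := hS.fst_mem_iff_snd_mem e he
  by_cases h : (bond e).1 ∈ S
  · rw [recolor_apply_of_mem h, recolor_apply_of_mem (hends.mp h), agreement_perm]
  · rw [recolor_apply_of_notMem h, recolor_apply_of_notMem (mt hends.mpr h), agreement_perm]

theorem sum_exp_mul_agreement_sub_one [Fintype α] (β : ℝ) (a : α) :
    ∑ b, Real.exp (β * (agreement a b - 1)) =
      1 + ((Fintype.card α : ℝ) - 1) * Real.exp (-2 * β) := by
  have hne : ∀ b ∈ univ.erase a, Real.exp (β * (agreement a b - 1)) = Real.exp (-2 * β) :=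
    fun b hb => by rw [agreement_of_ne (ne_of_mem_erase hb).symm]; ring_nf
  rw [← add_sum_erase _ _ (mem_univ a), sum_congr rfl hne, sum_const, nsmul_eq_mul,
    cast_card_erase_of_mem (mem_univ a), card_univ, agreement_self, sub_self, mul_zero,
    Real.exp_zero]

/-- The unnormalized Gibbs weight of the Potts model on a multigraph with coupling `J e` at the
bond `e`. -/
noncomputable def pottsWeight [Fintype ι] (bond : ι → V × V) (J : ι → ℝ) (x : V → α) : ℝ :=
  Real.exp (∑ e, J e * agreement (x (bond e).1) (x (bond e).2))

theorem pottsWeight_pos [Fintype ι] (bond : ι → V × V) (J : ι → ℝ) (x : V → α) :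
    0 < pottsWeight bond J x :=
  Real.exp_pos _

theorem pottsWeight_eq_exp_mul_of_agreement_eq [Fintype ι] {bond : ι → V × V} (J : ι → ℝ)
    {e₀ : ι} {x y : V → α}
    (hxy : ∀ e ≠ e₀, agreement (x (bond e).1) (x (bond e).2) =
      agreement (y (bond e).1) (y (bond e).2)) :
    pottsWeight bond J x = Real.exp (J e₀ * (agreement (x (bond e₀).1) (x (bond e₀).2) -
      agreement (y (bond e₀).1) (y (bond e₀).2))) * pottsWeight bond J y := by
  rw [pottsWeight, pottsWeight, ← Real.exp_add, Real.exp_eq_exp, ← sub_eq_iff_eq_add,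
    ← sum_sub_distrib, Fintype.sum_eq_single e₀ fun e he => by rw [hxy e he, sub_self], mul_sub]

variable [Fintype V] [DecidableEq V] [Fintype α]

/-- The configurations with color `a` at the site `p.1` and `b` at the site `p.2`. With `p` the
bond from `i` to `i + 1` of the chain and `a = c⁽¹⁾`, `b = c⁽ᵏ⁾`, this is the set `W⁽ᵏ⁾`. -/
def configsWithColors (p : V × V) (a b : α) : Finset (V → α) :=
  univ.filter fun x => x p.1 = a ∧ x p.2 = b

theorem mem_configsWithColors {p : V × V} {a b : α} {x : V → α} :
    x ∈ configsWithColors p a b ↔ x p.1 = a ∧ x p.2 = b :=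
  mem_filter_univ x

theorem sum_sum_configsWithColors {M : Type*} [AddCommMonoid M] (p : V × V) (f : (V → α) → M) :
    ∑ a, ∑ b, ∑ x ∈ configsWithColors p a b, f x = ∑ x, f x := by
  rw [← sum_fiberwise univ fun x : V → α => (x p.1, x p.2), Fintype.sum_prod_type]
  simp only [configsWithColors, Prod.mk.injEq]

theorem IsBridgeCut.recolor_swap_mem_configsWithColors_iff {bond : ι → V × V} {e₀ : ι} {S : Set V}
    (hS : IsBridgeCut bond e₀ S) (a b a' b' : α) (x : V → α) :
    recolor S (Equiv.swap a a') (Equiv.swap b b') x ∈ configsWithColors (bond e₀) a' b' ↔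
      x ∈ configsWithColors (bond e₀) a b := by
  rw [mem_configsWithColors, mem_configsWithColors, recolor_apply_of_mem hS.fst_mem,
    recolor_apply_of_notMem hS.snd_notMem, Equiv.swap_apply_eq_iff, Equiv.swap_apply_eq_iff,
    Equiv.swap_apply_right, Equiv.swap_apply_right]

variable [Fintype ι]

variable (α) in
/-- The partition function of the Potts model with `α` as the set of colors. -/
noncomputable def pottsPartition (bond : ι → V × V) (J : ι → ℝ) : ℝ :=
  ∑ x : V → α, pottsWeight bond J x

/-- The Gibbs measure of the Potts model, as a probability mass function with real values. -/
noncomputable def pottsMeasure (bond : ι → V × V) (J : ι → ℝ) (x : V → α) : ℝ :=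
  pottsWeight bond J x / pottsPartition α bond J

theorem sum_pottsWeight_self_pos (bond : ι → V × V) (J : ι → ℝ) (p : V × V) (c : α) :
    0 < ∑ x ∈ configsWithColors p c c, pottsWeight bond J x :=
  sum_pos (fun x _ => pottsWeight_pos bond J x)
    ⟨Function.const V c, mem_configsWithColors.mpr ⟨rfl, rfl⟩⟩

namespace IsBridgeCut

variable {bond : ι → V × V} {e₀ : ι} {S : Set V}

theorem sum_pottsWeight_eq_exp_mul (hS : IsBridgeCut bond e₀ S) (J : ι → ℝ) (a b a' b' : α) :
    ∑ x ∈ configsWithColors (bond e₀) a b, pottsWeight bond J x =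
      Real.exp (J e₀ * (agreement a b - agreement a' b')) *
        ∑ x ∈ configsWithColors (bond e₀) a' b', pottsWeight bond J x := by
  have hmem := hS.recolor_swap_mem_configsWithColors_iff a b a' b'
  rw [mul_sum]
  refine sum_equiv (recolor S (Equiv.swap a a') (Equiv.swap b b')) (fun x => (hmem x).symm)
    fun x hx => ?_
  obtain ⟨ha, hb⟩ := mem_configsWithColors.mp hx
  obtain ⟨ha', hb'⟩ := mem_configsWithColors.mp ((hmem x).mpr hx)
  have hbonds := fun e he => (hS.agreement_recolor (e := e) he (.swap a a') (.swap b b') x).symm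
  rw [pottsWeight_eq_exp_mul_of_agreement_eq J hbonds, ha, hb, ha', hb']

theorem pottsPartition_eq (hS : IsBridgeCut bond e₀ S) (J : ι → ℝ) (c : α) :
    pottsPartition α bond J =
      Fintype.card α * (1 + ((Fintype.card α : ℝ) - 1) * Real.exp (-2 * J e₀)) *
        ∑ x ∈ configsWithColors (bond e₀) c c, pottsWeight bond J x := by
  have hpair (a b : α) : ∑ x ∈ configsWithColors (bond e₀) a b, pottsWeight bond J x =
      Real.exp (J e₀ * (agreement a b - 1)) *
        ∑ x ∈ configsWithColors (bond e₀) c c, pottsWeight bond J x := by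
    rw [hS.sum_pottsWeight_eq_exp_mul J a b c c, agreement_self]
  rw [pottsPartition, ← sum_sum_configsWithColors (bond e₀),
    sum_congr rfl fun a _ => sum_congr rfl fun b _ => hpair a b]
  simp only [← sum_mul, sum_exp_mul_agreement_sub_one, sum_const, card_univ, nsmul_eq_mul]

theorem sum_pottsMeasure_eq (hS : IsBridgeCut bond e₀ S) (J : ι → ℝ) (a b : α) :
    ∑ x ∈ configsWithColors (bond e₀) a b, pottsMeasure bond J x =
      Real.exp (J e₀ * (agreement a b - 1)) /
        (Fintype.card α * (1 + ((Fintype.card α : ℝ) - 1) * Real.exp (-2 * J e₀))) := by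
  simp only [pottsMeasure]
  rw [← sum_div, hS.pottsPartition_eq J a, hS.sum_pottsWeight_eq_exp_mul J a b a a,
    agreement_self, mul_div_mul_right _ _ (sum_pottsWeight_self_pos bond J (bond e₀) a).ne']

end IsBridgeCut

theorem sum_W_N_state_general {bond : ι → V × V} {e₀ : ι} {S : Set V}
    (hS : IsBridgeCut bond e₀ S) (J : ι → ℝ) (c : α) :
    (∀ k : α, k ≠ c →
      ∑ x ∈ configsWithColors (bond e₀) c c, pottsWeight bond J x =
        Real.exp (2 * J e₀) * ∑ x ∈ configsWithColors (bond e₀) c k, pottsWeight bond J x) ∧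
    ∑ x ∈ configsWithColors (bond e₀) c c, pottsMeasure bond J x =
      1 / (Fintype.card α * (1 + ((Fintype.card α : ℝ) - 1) * Real.exp (-2 * J e₀))) ∧
    (∀ k : α, k ≠ c →
      ∑ x ∈ configsWithColors (bond e₀) c k, pottsMeasure bond J x =
        Real.exp (-2 * J e₀) /
          (Fintype.card α * (1 + ((Fintype.card α : ℝ) - 1) * Real.exp (-2 * J e₀)))) := by
  refine ⟨fun k hk => ?_, ?_, fun k hk => ?_⟩
  · rw [hS.sum_pottsWeight_eq_exp_mul J c c c k, agreement_self, agreement_of_ne hk.symm]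
    ring_nf
  · rw [hS.sum_pottsMeasure_eq, agreement_self, sub_self, mul_zero, Real.exp_zero]
  · rw [hS.sum_pottsMeasure_eq, agreement_of_ne hk.symm]
    ring_nf

end PottsModel

/-- The bonds of the chain on `n` sites: bond `k` joins the sites `k` and `k + 1`. -/
def chainBond (n : ℕ) (k : Fin (n - 1)) : Fin n × Fin n :=
  (⟨k.1, by omega⟩, ⟨k.1 + 1, by omega⟩)

theorem isBridgeCut_chainBond {n : ℕ} (i : Fin (n - 1)) :
    IsBridgeCut (chainBond n) i {j | j.1 ≤ i.1} where
  fst_mem := Nat.le_refl i.1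
  snd_notMem := Nat.not_succ_le_self i.1
  fst_mem_iff_snd_mem k hk := by
    simp only [chainBond, Set.mem_ofPred_eq]
    omega

theorem isingW_eq_pottsWeight (N n : ℕ) (T : ℝ) :
    isingW N n T = pottsWeight (chainBond n) fun _ => 1 / T := by
  funext x
  rw [isingW, mul_sum]
  rfl

theorem isingPi_eq_pottsMeasure (N n : ℕ) (T : ℝ) :
    isingPi N n T = pottsMeasure (chainBond n) fun _ => 1 / T := by
  funext x
  simp only [isingPi, isingZ, isingW_eq_pottsWeight, pottsMeasure, pottsPartition]

/-- For the `N`-state 1-D Ising model with `W^(k) = {x | x_i = c⁽¹⁾, x_{i+1} = c⁽ᵏ⁾}`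
for a fixed interior site `i` (colors enumerated by `Fin N`, `c⁽¹⁾ = c₁`):
`∑_{x ∈ W^(1)} w(x) = e^{2/T} ∑_{x ∈ W^(k)} w(x)` for every `k ≠ c₁`, and consequently
`∑_{x ∈ W^(1)} π(x) = 1/(N(1+(N-1)e^{-2/T}))` and
`∑_{x ∈ W^(k)} π(x) = e^{-2/T}/(N(1+(N-1)e^{-2/T}))` for `k ≠ c₁`. -/
theorem sum_W_N_state (N : ℕ) (hN : 2 ≤ N) (n : ℕ) (hn : 3 ≤ n) (T : ℝ) (hT : 0 < T)
    (c₁ : Fin N) (i : ℕ) (hi1 : 1 ≤ i) (hi2 : i ≤ n - 2) :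
    (∀ k : Fin N, k ≠ c₁ →
      (∑ x ∈ Finset.univ.filter (fun x : Fin n → Fin N =>
          x ⟨i, by omega⟩ = c₁ ∧ x ⟨i + 1, by omega⟩ = c₁), isingW N n T x)
        = Real.exp (2 / T) * ∑ x ∈ Finset.univ.filter (fun x : Fin n → Fin N =>
            x ⟨i, by omega⟩ = c₁ ∧ x ⟨i + 1, by omega⟩ = k), isingW N n T x) ∧
    (∑ x ∈ Finset.univ.filter (fun x : Fin n → Fin N =>
        x ⟨i, by omega⟩ = c₁ ∧ x ⟨i + 1, by omega⟩ = c₁), isingPi N n T x)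
      = 1 / ((N : ℝ) * (1 + ((N : ℝ) - 1) * Real.exp (-2 / T))) ∧
    (∀ k : Fin N, k ≠ c₁ →
      (∑ x ∈ Finset.univ.filter (fun x : Fin n → Fin N =>
          x ⟨i, by omega⟩ = c₁ ∧ x ⟨i + 1, by omega⟩ = k), isingPi N n T x)
        = Real.exp (-2 / T) / ((N : ℝ) * (1 + ((N : ℝ) - 1) * Real.exp (-2 / T)))) := by
  have h := sum_W_N_state_general (isBridgeCut_chainBond (n := n) ⟨i, by omega⟩) (fun _ => 1 / T) c₁
  simp only [← isingW_eq_pottsWeight, ← isingPi_eq_pottsMeasure, mul_one_div, Fintype.card_fin] at h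
  exact h
end

section
/- Let P be a reversible irreducible aperiodic Markov kernel on a finite state space χ with stationary distribution π of full support, and let β* be the maximum of the absolute values of all eigenvalues of P other than 1. Then for all x ∈ χ and k ∈ ℕ, (∑_{y ∈ χ} |P^k(x,y) - π(y)|)² ≤ ((1 - π(x))/π(x))·(β*)^{2k}. -/
open Finset

/-!
Reversibility makes `P` self-adjoint on `L²(π)`, and it turns the evolution `p ↦ p P^k` of
distributions into the evolution `f ↦ P^k f` of the centred densities `f = p / π - 1`. Such an `f`
is orthogonal to the constants, which span the eigenspace of `1`, so the spectral theorem gives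
`‖P^k f‖² ≤ (β*)^{2k} ‖f‖²` in `L²(π)`. These squared norms are `χ²`-distances to `π`: for the point
mass at `x` the initial one is `(1 - π x) / π x`, and by Cauchy–Schwarz the `ℓ¹`-distance is at most
the square root of the `χ²`-distance.
-/

open Module.End (HasEigenvalue HasEigenvector eigenspace)
open scoped Matrix

section Spectral

theorem norm_sq_pow_apply_le_of_isSymmetric {𝕜 E : Type*} [RCLike 𝕜] [NormedAddCommGroup E]
    [InnerProductSpace 𝕜 E] [FiniteDimensional 𝕜 E] {T : E →ₗ[𝕜] E} (hT : T.IsSymmetric)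
    {β : ℝ} {w : E} (hβ : ∀ (μ : 𝕜) (v : E), HasEigenvector T μ v → ‖μ‖ ≤ β ∨ inner 𝕜 v w = 0)
    (k : ℕ) : ‖(T ^ k) w‖ ^ 2 ≤ β ^ (2 * k) * ‖w‖ ^ 2 := by
  set b := hT.eigenvectorBasis rfl
  have hb (i) : HasEigenvector T (hT.eigenvalues rfl i : 𝕜) (b i) :=
    hT.hasEigenvector_eigenvectorBasis rfl i
  rw [← b.sum_sq_norm_inner_right, ← b.sum_sq_norm_inner_right w, mul_sum]
  refine sum_le_sum fun i _ ↦ ?_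
  have hcoeff : ‖inner 𝕜 (b i) ((T ^ k) w)‖ ^ 2
      = ‖(hT.eigenvalues rfl i : 𝕜)‖ ^ (2 * k) * ‖inner 𝕜 (b i) w‖ ^ 2 := by
    rw [← hT.pow k, (hb i).pow_apply, inner_smul_left, norm_mul, RCLike.norm_conj, norm_pow,
      mul_pow, ← pow_mul, mul_comm k]
  rw [hcoeff]
  rcases hβ _ _ (hb i) with hle | horth
  · gcongr
  · simp [horth]

theorem abs_le_sSup_abs_eigenvalue_ne {V : Type*} [AddCommGroup V] [Module ℝ V]
    [FiniteDimensional ℝ V] {T : Module.End ℝ V} {a μ : ℝ} (hμ : HasEigenvalue T μ) (hne : μ ≠ a) :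
    |μ| ≤ sSup {r : ℝ | ∃ μ : ℝ, HasEigenvalue T μ ∧ μ ≠ a ∧ r = |μ|} := by
  have hfin : {r : ℝ | ∃ μ : ℝ, HasEigenvalue T μ ∧ μ ≠ a ∧ r = |μ|}.Finite := by
    refine (T.finite_hasEigenvalue.image (|·|)).subset ?_
    rintro _ ⟨ν, hν, -, rfl⟩
    exact ⟨ν, hν, rfl⟩
  exact le_csSup hfin.bddAbove ⟨μ, hμ, hne, rfl⟩

end Spectral

section Harmonic

variable {χ R : Type*} [Fintype χ]

theorem pow_mulVec_eq_self [DecidableEq χ] [Semiring R] {A : Matrix χ χ R} {f : χ → R}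
    (hf : A *ᵥ f = f) (k : ℕ) : A ^ k *ᵥ f = f := by
  induction k with
  | zero => simp
  | succ k ih => rw [pow_succ, ← Matrix.mulVec_mulVec, hf, ih]

/-- Maximum principle: where `f` is maximal, at `m` say, the sum `∑ z, A m z * (f m - f z)` of
nonnegative terms vanishes. -/
theorem eq_of_mulVec_eq_self_of_pos [Ring R] [LinearOrder R] [IsStrictOrderedRing R]
    {A : Matrix χ χ R} (hA : ∀ x y, 0 < A x y) (hone : A *ᵥ 1 = 1) {f : χ → R} (hf : A *ᵥ f = f)
    (x y : χ) : f x = f y := by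
  have : Nonempty χ := ⟨x⟩
  obtain ⟨m, hm⟩ := Finite.exists_max f
  have hsum : ∑ z, A m z * (f m - f z) = 0 := by
    have hone' : ∑ z, A m z = 1 := by simpa [Matrix.mulVec, dotProduct] using congrFun hone m
    have hf' : ∑ z, A m z * f z = f m := congrFun hf m
    simp only [mul_sub, sum_sub_distrib, ← sum_mul, hone', hf', one_mul, sub_self]
  rw [sum_eq_zero_iff_of_nonneg fun z _ ↦ mul_nonneg (hA m z).le (sub_nonneg.2 (hm z))] at hsum
  have hmax (z) : f m = f z :=
    sub_eq_zero.1 ((mul_eq_zero.1 (hsum z (mem_univ z))).resolve_left (hA m z).ne')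
  rw [← hmax x, ← hmax y]

theorem eigenspace_one_eq_span_one_of_pow_pos [DecidableEq χ] [CommRing R] [LinearOrder R]
    [IsStrictOrderedRing R] {A : Matrix χ χ R} (hone : A *ᵥ 1 = 1) {k : ℕ}
    (hk : ∀ x y, 0 < (A ^ k) x y) :
    eigenspace (Matrix.toLin' A) 1 = Submodule.span R {1} := by
  ext f
  rw [Module.End.mem_eigenspace_iff, Matrix.toLin'_apply, one_smul, Submodule.mem_span_singleton]
  constructor
  · intro hf
    have hconst := eq_of_mulVec_eq_self_of_pos hk (pow_mulVec_eq_self hone k)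
      (pow_mulVec_eq_self hf k)
    rcases isEmpty_or_nonempty χ with _ | ⟨⟨x⟩⟩
    · exact ⟨0, Subsingleton.elim _ _⟩
    · exact ⟨f x, funext fun y ↦ by simp [hconst x y]⟩
  · rintro ⟨c, rfl⟩
    rw [Matrix.mulVec_smul, hone]

end Harmonic

/-- Detailed balance: the kernel `P` is reversible with respect to the weights `π`. Neither
positivity nor any normalization of `P` and `π` is part of the notion. -/
def IsReversible {χ R : Type*} [Mul R] (P : Matrix χ χ R) (π : χ → R) : Prop :=
  ∀ x y, π x * P x y = π y * P y x

theorem isReversible_iff_semiconjBy_diagonal {χ R : Type*} [Fintype χ] [DecidableEq χ]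
    [CommSemiring R] {P : Matrix χ χ R} {π : χ → R} :
    IsReversible P π ↔ SemiconjBy (Matrix.diagonal π) P Pᵀ := by
  simp only [IsReversible, SemiconjBy, ← Matrix.ext_iff, Matrix.diagonal_mul, Matrix.mul_diagonal,
    Matrix.transpose_apply, mul_comm (P _ _)]

namespace IsReversible

variable {χ R : Type*} [Fintype χ]

theorem pow [DecidableEq χ] [CommSemiring R] {P : Matrix χ χ R} {π : χ → R}
    (h : IsReversible P π) (k : ℕ) : IsReversible (P ^ k) π := by
  rw [isReversible_iff_semiconjBy_diagonal, Matrix.transpose_pow]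
  exact (isReversible_iff_semiconjBy_diagonal.1 h).pow_right k

theorem sum_mul_mulVec_comm [CommSemiring R] {P : Matrix χ χ R} {π : χ → R}
    (h : IsReversible P π) (f g : χ → R) :
    ∑ x, π x * f x * (P *ᵥ g) x = ∑ x, π x * (P *ᵥ f) x * g x := by
  classical
  have hadj : (Matrix.diagonal π *ᵥ f) ⬝ᵥ (P *ᵥ g) = (Matrix.diagonal π *ᵥ (P *ᵥ f)) ⬝ᵥ g := by
    rw [Matrix.dotProduct_mulVec, ← Matrix.mulVec_transpose, Matrix.mulVec_mulVec,
      Matrix.mulVec_mulVec, (isReversible_iff_semiconjBy_diagonal.1 h).eq]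
  simpa only [dotProduct, Matrix.mulVec_diagonal] using hadj

theorem mulVec_div [Field R] {P : Matrix χ χ R} {π : χ → R}
    (h : IsReversible P π) (hπ : ∀ x, π x ≠ 0) (p : χ → R) : P *ᵥ (p / π) = (p ᵥ* P) / π := by
  ext x
  simp only [Matrix.mulVec, Matrix.vecMul, dotProduct, Pi.div_apply, sum_div]
  refine sum_congr rfl fun y _ ↦ ?_
  have hx := hπ x
  have hy := hπ y
  field_simp
  linear_combination p y * h x y

theorem sum_mul_sq_pow_mulVec_le [DecidableEq χ] {P : Matrix χ χ ℝ} {π : χ → ℝ}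
    (h : IsReversible P π) (hπ : ∀ x, 0 < π x) {β : ℝ} {f : χ → ℝ}
    (hβ : ∀ (μ : ℝ) (v : χ → ℝ), HasEigenvector (Matrix.toLin' P) μ v →
      |μ| ≤ β ∨ ∑ x, π x * f x * v x = 0) (k : ℕ) :
    ∑ x, π x * ((P ^ k *ᵥ f) x) ^ 2 ≤ β ^ (2 * k) * ∑ x, π x * f x ^ 2 := by
  have hdiag : (Matrix.diagonal π).PosDef := Matrix.PosDef.diagonal hπ
  -- These instances shadow the sup norm that `χ → ℝ` carries by default.
  let : NormedAddCommGroup (χ → ℝ) := Matrix.toNormedAddCommGroup _ hdiag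
  let : SeminormedAddCommGroup (χ → ℝ) := NormedAddCommGroup.toSeminormedAddCommGroup
  let : InnerProductSpace ℝ (χ → ℝ) := Matrix.toInnerProductSpace _ hdiag.posSemidef
  have hinner (u v : χ → ℝ) : inner ℝ u v = ∑ x, π x * v x * u x := by
    change (Matrix.diagonal π *ᵥ v) ⬝ᵥ star u = _
    simp [dotProduct, Matrix.mulVec_diagonal]
  have hsymm : (Matrix.toLin' P).IsSymmetric := fun u v ↦ by
    simpa only [hinner, Matrix.toLin'_apply] using h.sum_mul_mulVec_comm v u
  have hcontr := norm_sq_pow_apply_le_of_isSymmetric hsymm (w := f)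
    (by simpa only [hinner, Real.norm_eq_abs] using hβ) k
  rw [← real_inner_self_eq_norm_sq, ← real_inner_self_eq_norm_sq, hinner, hinner,
    ← Matrix.toLin'_pow, Matrix.toLin'_apply] at hcontr
  simpa only [sq, mul_assoc] using hcontr

end IsReversible

section ChiSquare

variable {χ : Type*} [Fintype χ]

/-- The `χ²`-distance (Pearson divergence) of `p` from `π`, the squared norm of `p / π - 1` in
`L²(π)`. Points with `π y = 0` contribute `0`, so `π` should have full support. -/
noncomputable def chiSqDist (p π : χ → ℝ) : ℝ :=
  ∑ y, (p y - π y) ^ 2 / π y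

theorem chiSqDist_eq_sum_mul_sq {π : χ → ℝ} (hπ : ∀ x, π x ≠ 0) (p : χ → ℝ) :
    chiSqDist p π = ∑ y, π y * ((p / π - 1) y) ^ 2 := by
  refine sum_congr rfl fun y _ ↦ ?_
  have := hπ y
  simp only [Pi.sub_apply, Pi.div_apply, Pi.one_apply]
  field_simp

theorem chiSqDist_single_one [DecidableEq χ] {π : χ → ℝ} (hπsum : ∑ x, π x = 1) {x : χ}
    (hx : π x ≠ 0) : chiSqDist (Pi.single x 1) π = (1 - π x) / π x := by
  have hterm (y : χ) : ((Pi.single x 1 : χ → ℝ) y - π y) ^ 2 / π y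
      = (Pi.single x ((π x)⁻¹ - 2) : χ → ℝ) y + π y := by
    rcases eq_or_ne y x with rfl | hne
    · simp only [Pi.single_eq_same]
      field_simp
      ring
    · simp [hne, sq]
  simp only [chiSqDist, hterm, sum_add_distrib, sum_pi_single', mem_univ, if_true, hπsum]
  field_simp
  ring

theorem sq_sum_abs_sub_le_chiSqDist {π : χ → ℝ} (hπ : ∀ x, 0 < π x) (hπsum : ∑ x, π x = 1)
    (p : χ → ℝ) : (∑ y, |p y - π y|) ^ 2 ≤ chiSqDist p π := by
  simpa [hπsum, chiSqDist] using
    sq_sum_div_le_sum_sq_div univ (fun y ↦ |p y - π y|) fun y _ ↦ hπ y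

theorem chiSqDist_vecMul_pow_le [DecidableEq χ] {P : Matrix χ χ ℝ} {π p : χ → ℝ} {β : ℝ}
    (hrev : IsReversible P π) (hπ : ∀ x, 0 < π x)
    (hone : eigenspace (Matrix.toLin' P) 1 = Submodule.span ℝ {1})
    (hβ : ∀ μ, HasEigenvalue (Matrix.toLin' P) μ → μ ≠ 1 → |μ| ≤ β)
    (hp : ∑ x, p x = ∑ x, π x) (k : ℕ) :
    chiSqDist (p ᵥ* P ^ k) π ≤ chiSqDist p π * β ^ (2 * k) := by
  have hπ' (x) : π x ≠ 0 := (hπ x).ne'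
  have hone' : P *ᵥ 1 = 1 := by
    simpa [Module.End.mem_eigenspace_iff] using hone.ge (Submodule.mem_span_singleton_self 1)
  have hevolve : P ^ k *ᵥ (p / π - 1) = (p ᵥ* P ^ k) / π - 1 := by
    rw [Matrix.mulVec_sub, (hrev.pow k).mulVec_div hπ', pow_mulVec_eq_self hone']
  have horth (μ : ℝ) (v : χ → ℝ) (hv : HasEigenvector (Matrix.toLin' P) μ v) :
      |μ| ≤ β ∨ ∑ x, π x * (p / π - 1) x * v x = 0 := by
    rcases ne_or_eq μ 1 with hμ | rfl
    · exact .inl (hβ μ (Module.End.hasEigenvalue_of_hasEigenvector hv) hμ)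
    · obtain ⟨c, rfl⟩ := Submodule.mem_span_singleton.1 (hone.le hv.1)
      right
      simp [← sum_mul, mul_sub, mul_div_cancel₀, hπ', hp]
  rw [chiSqDist_eq_sum_mul_sq hπ', chiSqDist_eq_sum_mul_sq hπ', ← hevolve, mul_comm]
  exact hrev.sum_mul_sq_pow_mulVec_le hπ horth k

end ChiSquare

theorem diaconis_stroock_convergence_bound_general {χ : Type*} [Fintype χ] [DecidableEq χ]
    {P : Matrix χ χ ℝ} {π p : χ → ℝ} {β : ℝ}
    (hrev : IsReversible P π) (hπpos : ∀ x, 0 < π x) (hπsum : ∑ x, π x = 1)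
    (hone : eigenspace (Matrix.toLin' P) 1 = Submodule.span ℝ {1})
    (hβ : ∀ μ, HasEigenvalue (Matrix.toLin' P) μ → μ ≠ 1 → |μ| ≤ β)
    (hp : ∑ x, p x = 1) (k : ℕ) :
    (∑ y, |(p ᵥ* P ^ k) y - π y|) ^ 2 ≤ chiSqDist p π * β ^ (2 * k) :=
  (sq_sum_abs_sub_le_chiSqDist hπpos hπsum _).trans <|
    chiSqDist_vecMul_pow_le hrev hπpos hone hβ (hp.trans hπsum.symm) k

/-- Diaconis–Stroock total-variation convergence bound: for a reversible, irreducible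
and aperiodic Markov kernel `P` on a finite state space with stationary distribution
`π` of full support, letting `β*` be the maximum of the absolute values of the
eigenvalues of `P` other than `1`, one has for all states `x` and all `k`:
`(∑_y |P^k(x,y) - π(y)|)² ≤ ((1-π(x))/π(x)) (β*)^{2k}`. -/
theorem diaconis_stroock_convergence_bound
    {χ : Type*} [Fintype χ] [DecidableEq χ] [Nonempty χ]
    (P : χ → χ → ℝ) (π : χ → ℝ)
    (hPnonneg : ∀ x y, 0 ≤ P x y)
    (hProw : ∀ x, ∑ y, P x y = 1)
    (hπpos : ∀ x, 0 < π x)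
    (hπsum : ∑ x, π x = 1)
    (hrev : ∀ x y, π x * P x y = π y * P y x)
    (hprim : ∃ k : ℕ, ∀ x y : χ, 0 < ((Matrix.of P) ^ k) x y)
    (βstar : ℝ)
    (hβstar : βstar = sSup {r : ℝ | ∃ μ : ℝ,
      Module.End.HasEigenvalue (Matrix.toLin' (Matrix.of P)) μ ∧ μ ≠ 1 ∧ r = |μ|}) :
    ∀ (x : χ) (k : ℕ),
      (∑ y : χ, |((Matrix.of P) ^ k) x y - π y|) ^ 2
        ≤ (1 - π x) / π x * βstar ^ (2 * k) := by
  intro x k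
  obtain ⟨m, hm⟩ := hprim
  have hone : Matrix.of P *ᵥ 1 = 1 := by
    ext z
    simpa [Matrix.mulVec, dotProduct] using hProw z
  have hbound := diaconis_stroock_convergence_bound_general (P := Matrix.of P) (p := Pi.single x 1)
    hrev hπpos hπsum (eigenspace_one_eq_span_one_of_pow_pos hone hm)
    (fun μ hμ hne ↦ hβstar ▸ abs_le_sSup_abs_eigenvalue_ne hμ hne) (by simp) k
  simpa only [Matrix.single_one_vecMul, Matrix.row_apply,
    chiSqDist_single_one hπsum (hπpos x).ne'] using hbound
end
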